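/- Let 0 < θ ≤ π/4, let a, b ∈ M_3(ℂ) be positive semidefinite with ⟨ψ_i, (a⊗b) ψ_i⟩ ≠ 0 for each of the nine states ψ_i of S_3(θ), and let δ be the disturbance of a⊗b on S_3(θ). Fix any s ≥ 3 and define 1/r(s) := min{ (1/14)(1/3 − 1/s), (1/(2(1+√2·s)))(1/3 − 1/s) }. If δ/sin 2θ ≤ 1/r(s), then a_{11} ≥ (1/s)·‖a‖_∞ and b_{11} ≥ (1/s)·‖b‖_∞. -/

import Mathlib

open Matrix Kronecker
open scoped ComplexOrder

/-- The disturbance `δ` of the product operator `a ⊗ b` on the family of states `ψ`. -/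
noncomputable def disturbance {n dA dB : ℕ} (ψ : Fin n → Fin dA × Fin dB → ℂ)
    (a : Matrix (Fin dA) (Fin dA) ℂ) (b : Matrix (Fin dB) (Fin dB) ℂ) : ℝ :=
  ⨆ p : {q : Fin n × Fin n // q.1 ≠ q.2},
    ‖star (ψ p.1.1) ⬝ᵥ (a ⊗ₖ b).mulVec (ψ p.1.2)‖ /
      Real.sqrt ((star (ψ p.1.1) ⬝ᵥ (a ⊗ₖ b).mulVec (ψ p.1.1)).re *
        (star (ψ p.1.2) ⬝ᵥ (a ⊗ₖ b).mulVec (ψ p.1.2)).re)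

/-- The standard basis vector `|i⟩` of `ℂ³`. -/
noncomputable def e3 (i : Fin 3) : Fin 3 → ℂ := fun k => if k = i then 1 else 0

/-- The product vector `α ⊗ β` in `ℂ³ ⊗ ℂ³`. -/
noncomputable def kp (α β : Fin 3 → ℂ) : Fin 3 × Fin 3 → ℂ := fun p => α p.1 * β p.2

/-- The nine rotated domino states `S₃(θ₁,θ₂,θ₃,θ₄)` in `ℂ³ ⊗ ℂ³`. -/
noncomputable def rotDomino (t1 t2 t3 t4 : ℝ) : Fin 9 → Fin 3 × Fin 3 → ℂ :=
  ![kp (e3 1) (e3 1),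
    kp (e3 0) (fun k => (Real.cos t1 : ℂ) * e3 0 k + (Real.sin t1 : ℂ) * e3 1 k),
    kp (e3 0) (fun k => -(Real.sin t1 : ℂ) * e3 0 k + (Real.cos t1 : ℂ) * e3 1 k),
    kp (e3 2) (fun k => (Real.cos t2 : ℂ) * e3 1 k + (Real.sin t2 : ℂ) * e3 2 k),
    kp (e3 2) (fun k => -(Real.sin t2 : ℂ) * e3 1 k + (Real.cos t2 : ℂ) * e3 2 k),
    kp (fun k => (Real.cos t3 : ℂ) * e3 1 k + (Real.sin t3 : ℂ) * e3 2 k) (e3 0),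
    kp (fun k => -(Real.sin t3 : ℂ) * e3 1 k + (Real.cos t3 : ℂ) * e3 2 k) (e3 0),
    kp (fun k => (Real.cos t4 : ℂ) * e3 0 k + (Real.sin t4 : ℂ) * e3 1 k) (e3 2),
    kp (fun k => -(Real.sin t4 : ℂ) * e3 0 k + (Real.cos t4 : ℂ) * e3 1 k) (e3 2)]

/-- The operator (spectral) norm of a square complex matrix. -/
noncomputable def opNorm {n : ℕ} (M : Matrix (Fin n) (Fin n) ℂ) : ℝ :=
  ‖Matrix.toEuclideanCLM (𝕜 := ℂ) M‖

/-- The sesquilinear form `⟨u, M v⟩`. -/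
noncomputable def sesq (M : Matrix (Fin 3) (Fin 3) ℂ) (u v : Fin 3 → ℂ) : ℂ :=
  star u ⬝ᵥ M.mulVec v

/-- The first vector of the basis of `span {|i⟩, |j⟩}` rotated by the angle with cosine `c` and
sine `s`. -/
noncomputable def rotFst (c s : ℝ) (i j : Fin 3) : Fin 3 → ℂ :=
  fun k => (c : ℂ) * e3 i k + (s : ℂ) * e3 j k

/-- The second vector of the basis of `span {|i⟩, |j⟩}` rotated by the angle with cosine `c` and
sine `s`. -/
noncomputable def rotSnd (c s : ℝ) (i j : Fin 3) : Fin 3 → ℂ :=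
  fun k => -(s : ℂ) * e3 i k + (c : ℂ) * e3 j k

theorem sesq_e3 (M : Matrix (Fin 3) (Fin 3) ℂ) (i j : Fin 3) :
    sesq M (e3 i) (e3 j) = M i j := by
  simp [sesq, e3, dotProduct, mulVec]

theorem star_kp_dotProduct_kronecker_mulVec_kp (a b : Matrix (Fin 3) (Fin 3) ℂ)
    (α β γ ζ : Fin 3 → ℂ) :
    star (kp α β) ⬝ᵥ (a ⊗ₖ b).mulVec (kp γ ζ) = sesq a α γ * sesq b β ζ := by
  simp only [sesq, kp, dotProduct, mulVec, kroneckerMap_apply, Fintype.sum_prod_type,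
    Fin.sum_univ_three, Pi.star_apply, star_mul']
  ring

theorem sesq_linear_combination_left (M : Matrix (Fin 3) (Fin 3) ℂ) (c s : ℝ)
    (u w v : Fin 3 → ℂ) :
    sesq M (fun k => (c : ℂ) * u k + (s : ℂ) * w k) v = c * sesq M u v + s * sesq M w v := by
  simp only [sesq, dotProduct, mulVec, Fin.sum_univ_three, Pi.star_apply, star_add, star_mul',
    RCLike.star_def, Complex.conj_ofReal]
  ring

theorem sesq_linear_combination_right (M : Matrix (Fin 3) (Fin 3) ℂ) (c s : ℝ)
    (u w v : Fin 3 → ℂ) :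
    sesq M v (fun k => (c : ℂ) * u k + (s : ℂ) * w k) = c * sesq M v u + s * sesq M v w := by
  simp only [sesq, dotProduct, mulVec, Fin.sum_univ_three, Pi.star_apply]
  ring

theorem sesq_rotFst_left (M : Matrix (Fin 3) (Fin 3) ℂ) (c s : ℝ) (i j : Fin 3)
    (v : Fin 3 → ℂ) :
    sesq M (rotFst c s i j) v = c * sesq M (e3 i) v + s * sesq M (e3 j) v :=
  sesq_linear_combination_left M c s _ _ v

theorem sesq_rotFst_right (M : Matrix (Fin 3) (Fin 3) ℂ) (c s : ℝ) (i j : Fin 3)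
    (v : Fin 3 → ℂ) :
    sesq M v (rotFst c s i j) = c * sesq M v (e3 i) + s * sesq M v (e3 j) :=
  sesq_linear_combination_right M c s _ _ v

theorem sesq_rotSnd_left (M : Matrix (Fin 3) (Fin 3) ℂ) (c s : ℝ) (i j : Fin 3)
    (v : Fin 3 → ℂ) :
    sesq M (rotSnd c s i j) v = -s * sesq M (e3 i) v + c * sesq M (e3 j) v := by
  have h := sesq_linear_combination_left M (-s) c (e3 i) (e3 j) v
  rw [Complex.ofReal_neg] at h
  exact h

theorem sesq_rotSnd_right (M : Matrix (Fin 3) (Fin 3) ℂ) (c s : ℝ) (i j : Fin 3)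
    (v : Fin 3 → ℂ) :
    sesq M v (rotSnd c s i j) = -s * sesq M v (e3 i) + c * sesq M v (e3 j) := by
  have h := sesq_linear_combination_right M (-s) c (e3 i) (e3 j) v
  rw [Complex.ofReal_neg] at h
  exact h

/-- The vectors `w₁, w₂` have the properties of an orthonormal basis of `span {|i⟩, |j⟩}` that the
estimates below rely on. -/
structure IsPlaneBasis (w₁ w₂ : Fin 3 → ℂ) (i j : Fin 3) : Prop where
  normSq_left (M : Matrix (Fin 3) (Fin 3) ℂ) (v : Fin 3 → ℂ) :
    Complex.normSq (sesq M w₁ v) + Complex.normSq (sesq M w₂ v) =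
      Complex.normSq (sesq M (e3 i) v) + Complex.normSq (sesq M (e3 j) v)
  normSq_right (M : Matrix (Fin 3) (Fin 3) ℂ) (v : Fin 3 → ℂ) :
    Complex.normSq (sesq M v w₁) + Complex.normSq (sesq M v w₂) =
      Complex.normSq (sesq M v (e3 i)) + Complex.normSq (sesq M v (e3 j))
  re_add_re (M : Matrix (Fin 3) (Fin 3) ℂ) :
    (sesq M w₁ w₁).re + (sesq M w₂ w₂).re = (M i i).re + (M j j).re

theorem IsPlaneBasis.symm {w₁ w₂ : Fin 3 → ℂ} {i j : Fin 3} (h : IsPlaneBasis w₁ w₂ i j) :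
    IsPlaneBasis w₁ w₂ j i where
  normSq_left M v := (h.normSq_left M v).trans (add_comm _ _)
  normSq_right M v := (h.normSq_right M v).trans (add_comm _ _)
  re_add_re M := (h.re_add_re M).trans (add_comm _ _)

theorem normSq_rotation {c s : ℝ} (hcs : c ^ 2 + s ^ 2 = 1) (x y : ℂ) :
    Complex.normSq (c * x + s * y) + Complex.normSq (-s * x + c * y) =
      Complex.normSq x + Complex.normSq y := by
  simp only [Complex.normSq_apply, Complex.add_re, Complex.add_im, Complex.mul_re, Complex.mul_im,
    Complex.neg_re, Complex.neg_im, Complex.ofReal_re, Complex.ofReal_im]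
  linear_combination (x.re ^ 2 + x.im ^ 2 + y.re ^ 2 + y.im ^ 2) * hcs

theorem isPlaneBasis_rot {c s : ℝ} (hcs : c ^ 2 + s ^ 2 = 1) (i j : Fin 3) :
    IsPlaneBasis (rotFst c s i j) (rotSnd c s i j) i j where
  normSq_left M v := by
    rw [sesq_rotFst_left, sesq_rotSnd_left, normSq_rotation hcs]
  normSq_right M v := by
    rw [sesq_rotFst_right, sesq_rotSnd_right, normSq_rotation hcs]
  re_add_re M := by
    simp only [sesq_rotFst_left, sesq_rotSnd_left, sesq_rotFst_right, sesq_rotSnd_right, sesq_e3,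
      Complex.add_re, Complex.add_im, Complex.mul_re, Complex.mul_im,
      Complex.neg_re, Complex.neg_im, Complex.ofReal_re, Complex.ofReal_im]
    linear_combination ((M i i).re + (M j j).re) * hcs

theorem sesq_self_nonneg {M : Matrix (Fin 3) (Fin 3) ℂ} (hM : M.PosSemidef) (v : Fin 3 → ℂ) :
    0 ≤ sesq M v v :=
  hM.dotProduct_mulVec_nonneg v

theorem re_diag_nonneg {M : Matrix (Fin 3) (Fin 3) ℂ} (hM : M.PosSemidef) (i : Fin 3) :
    0 ≤ (M i i).re :=
  (Complex.nonneg_iff.1 hM.diag_nonneg).1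

/-- The product vectors `α ⊗ β` and `γ ⊗ ζ` are disturbed by `M ⊗ N` by at most `d`. -/
def DisturbedBy (M N : Matrix (Fin 3) (Fin 3) ℂ) (d : ℝ) (α β γ ζ : Fin 3 → ℂ) : Prop :=
  Complex.normSq (sesq M α γ) * Complex.normSq (sesq N β ζ) ≤
    d ^ 2 * ((sesq M α α).re * (sesq N β β).re * ((sesq M γ γ).re * (sesq N ζ ζ).re))

theorem DisturbedBy.swap {M N : Matrix (Fin 3) (Fin 3) ℂ} {d : ℝ} {α β γ ζ : Fin 3 → ℂ}
    (h : DisturbedBy M N d α β γ ζ) : DisturbedBy N M d β α ζ γ := by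
  unfold DisturbedBy at h ⊢
  linarith

theorem disturbance_nonneg {n dA dB : ℕ} (ψ : Fin n → Fin dA × Fin dB → ℂ)
    (a : Matrix (Fin dA) (Fin dA) ℂ) (b : Matrix (Fin dB) (Fin dB) ℂ) :
    0 ≤ disturbance ψ a b :=
  Real.iSup_nonneg fun _ => by positivity

theorem normSq_le_disturbance {n dA dB : ℕ} {ψ : Fin n → Fin dA × Fin dB → ℂ}
    {a : Matrix (Fin dA) (Fin dA) ℂ} {b : Matrix (Fin dB) (Fin dB) ℂ}
    (ha : a.PosSemidef) (hb : b.PosSemidef)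
    (hnz : ∀ i, star (ψ i) ⬝ᵥ (a ⊗ₖ b).mulVec (ψ i) ≠ 0) {i j : Fin n} (hij : i ≠ j) :
    Complex.normSq (star (ψ i) ⬝ᵥ (a ⊗ₖ b).mulVec (ψ j)) ≤
      disturbance ψ a b ^ 2 * ((star (ψ i) ⬝ᵥ (a ⊗ₖ b).mulVec (ψ i)).re *
        (star (ψ j) ⬝ᵥ (a ⊗ₖ b).mulVec (ψ j)).re) := by
  have hpos : ∀ i, 0 < (star (ψ i) ⬝ᵥ (a ⊗ₖ b).mulVec (ψ i)).re := fun i =>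
    (Complex.pos_iff.1 (lt_of_le_of_ne ((ha.kronecker hb).dotProduct_mulVec_nonneg (ψ i))
      (hnz i).symm)).1
  have hprod := mul_pos (hpos i) (hpos j)
  have hle := le_ciSup (f := fun p : {q : Fin n × Fin n // q.1 ≠ q.2} =>
    ‖star (ψ p.1.1) ⬝ᵥ (a ⊗ₖ b).mulVec (ψ p.1.2)‖ /
      Real.sqrt ((star (ψ p.1.1) ⬝ᵥ (a ⊗ₖ b).mulVec (ψ p.1.1)).re *
        (star (ψ p.1.2) ⬝ᵥ (a ⊗ₖ b).mulVec (ψ p.1.2)).re))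
    (Set.finite_range _).bddAbove ⟨(i, j), hij⟩
  rw [div_le_iff₀ (Real.sqrt_pos.2 hprod)] at hle
  rw [Complex.normSq_eq_norm_sq, ← Real.sq_sqrt hprod.le, ← mul_pow]
  exact pow_le_pow_left₀ (norm_nonneg _) hle 2

theorem disturbedBy_of_kp {M N : Matrix (Fin 3) (Fin 3) ℂ} (hM : M.PosSemidef) {d : ℝ}
    {α β γ ζ : Fin 3 → ℂ}
    (h : Complex.normSq (star (kp α β) ⬝ᵥ (M ⊗ₖ N).mulVec (kp γ ζ)) ≤
      d ^ 2 * ((star (kp α β) ⬝ᵥ (M ⊗ₖ N).mulVec (kp α β)).re *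
        (star (kp γ ζ) ⬝ᵥ (M ⊗ₖ N).mulVec (kp γ ζ)).re)) :
    DisturbedBy M N d α β γ ζ := by
  have him : ∀ v, (sesq M v v).im = 0 := fun v =>
    (Complex.nonneg_iff.1 (sesq_self_nonneg hM v)).2.symm
  simpa [DisturbedBy, star_kp_dotProduct_kronecker_mulVec_kp, Complex.normSq_mul, Complex.mul_re,
    him] using h

/-- An off-diagonal entry in the row of the centre is bounded by comparing the domino
`|p⟩ ⊗ {|1⟩, |r⟩}` with the centre and with the domino `{|1⟩, |o⟩} ⊗ |r⟩`. -/
theorem normSq_off_diag_le {M N : Matrix (Fin 3) (Fin 3) ℂ} (hM : M.PosSemidef) {d : ℝ}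
    (hN : 0 < (N 1 1).re) {p o r : Fin 3} {u w : Fin 2 → Fin 3 → ℂ}
    (hu : IsPlaneBasis (u 0) (u 1) 1 r) (hw : IsPlaneBasis (w 0) (w 1) 1 o)
    (hcentre : ∀ k, DisturbedBy M N d (e3 1) (e3 1) (e3 p) (u k))
    (hcross : ∀ l k, DisturbedBy M N d (w l) (e3 r) (e3 p) (u k)) :
    Complex.normSq (M 1 p) ≤ 2 * d ^ 2 * ((M p p).re * ((M 1 1).re + (M o o).re)) := by
  have hp := re_diag_nonneg hM p
  have h1 := re_diag_nonneg hM 1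
  have ho := re_diag_nonneg hM o
  have hx := Complex.normSq_nonneg (M 1 p)
  have hsq : ∀ z : ℂ, z.re ^ 2 ≤ Complex.normSq z := fun z => by
    rw [Complex.normSq_apply]; nlinarith [mul_self_nonneg z.im]
  have hre := hu.re_add_re N
  unfold DisturbedBy at hcentre hcross
  simp only [sesq_e3] at hcentre hcross
  rcases le_total (N r r).re (N 1 1).re with hr | hr
  · have hsum := hu.normSq_right N (e3 1)
    simp only [sesq_e3] at hsum
    have key : Complex.normSq (M 1 p) * (N 1 1).re ^ 2 ≤
        2 * d ^ 2 * ((M p p).re * (M 1 1).re) * (N 1 1).re ^ 2 := calc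
      _ ≤ Complex.normSq (M 1 p) * (Complex.normSq (N 1 1) + Complex.normSq (N 1 r)) :=
        mul_le_mul_of_nonneg_left
          ((hsq _).trans (le_add_of_nonneg_right (Complex.normSq_nonneg _))) hx
      _ ≤ d ^ 2 * ((M 1 1).re * (N 1 1).re * ((M p p).re * ((N 1 1).re + (N r r).re))) := by
        rw [← hsum, ← hre]
        linarith [hcentre 0, hcentre 1]
      _ ≤ d ^ 2 * ((M 1 1).re * (N 1 1).re * ((M p p).re * ((N 1 1).re + (N 1 1).re))) := by
        gcongr
      _ = _ := by ring
    refine (le_of_mul_le_mul_right key (by positivity)).trans ?_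
    gcongr
    exact le_add_of_nonneg_right ho
  · have hNr : 0 < (N r r).re := hN.trans_le hr
    have hsum := hu.normSq_right N (e3 r)
    have hsum' := hw.normSq_left M (e3 p)
    have hre' := hw.re_add_re M
    simp only [sesq_e3] at hsum hsum'
    have key : Complex.normSq (M 1 p) * (N r r).re ^ 2 ≤
        2 * d ^ 2 * ((M p p).re * ((M 1 1).re + (M o o).re)) * (N r r).re ^ 2 := calc
      _ ≤ (Complex.normSq (M 1 p) + Complex.normSq (M o p)) *
          (Complex.normSq (N r 1) + Complex.normSq (N r r)) :=
        mul_le_mul (le_add_of_nonneg_right (Complex.normSq_nonneg _))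
          ((hsq _).trans (le_add_of_nonneg_left (Complex.normSq_nonneg _))) (by positivity)
          (add_nonneg hx (Complex.normSq_nonneg _))
      _ ≤ d ^ 2 * (((M 1 1).re + (M o o).re) * (N r r).re *
          ((M p p).re * ((N 1 1).re + (N r r).re))) := by
        rw [← hsum, ← hsum', ← hre, ← hre']
        linarith [hcross 0 0, hcross 0 1, hcross 1 0, hcross 1 1]
      _ ≤ d ^ 2 * (((M 1 1).re + (M o o).re) * (N r r).re *
          ((M p p).re * ((N r r).re + (N r r).re))) := by
        gcongr
      _ = _ := by ring
    exact le_of_mul_le_mul_right key (by positivity)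

theorem abs_mul_diag_sub_le {M N : Matrix (Fin 3) (Fin 3) ℂ} (hM : M.PosSemidef) {d c s : ℝ}
    (hd : 0 ≤ d) (hcs : c ^ 2 + s ^ 2 = 1) {i j k : Fin 3} (hN : 0 < (N k k).re)
    (h : DisturbedBy M N d (rotFst c s i j) (e3 k) (rotSnd c s i j) (e3 k)) :
    |c * s * ((M j j).re - (M i i).re)| ≤
      d * ((M i i).re + (M j j).re) / 2 + ‖M i j‖ := by
  have hi := re_diag_nonneg hM i
  have hj := re_diag_nonneg hM j
  set x := (sesq M (rotFst c s i j) (rotFst c s i j)).re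
  set y := (sesq M (rotSnd c s i j) (rotSnd c s i j)).re
  set z := sesq M (rotFst c s i j) (rotSnd c s i j) with hz
  have hxy : x + y = (M i i).re + (M j j).re := (isPlaneBasis_rot hcs i j).re_add_re M
  have hzre : z.re = c * s * ((M j j).re - (M i i).re) + (c ^ 2 - s ^ 2) * (M i j).re := by
    have hji : (M j i).re = (M i j).re := by
      rw [← hM.isHermitian.apply j i]; simp
    rw [hz]
    simp only [sesq_rotFst_left, sesq_rotSnd_right, sesq_e3, Complex.add_re, Complex.add_im,
      Complex.mul_re, Complex.mul_im, Complex.neg_re, Complex.neg_im, Complex.ofReal_re,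
      Complex.ofReal_im, hji]
    ring
  have hznorm : ‖z‖ ≤ d * ((M i i).re + (M j j).re) / 2 := by
    have h' : Complex.normSq z * Complex.normSq (N k k) ≤
        d ^ 2 * (x * (N k k).re * (y * (N k k).re)) := by
      simpa only [DisturbedBy, sesq_e3] using h
    have hNk : (N k k).re ^ 2 ≤ Complex.normSq (N k k) := by
      rw [Complex.normSq_apply]; nlinarith [mul_self_nonneg (N k k).im]
    have hsq : Complex.normSq z ≤ d ^ 2 * (x * y) := by
      refine le_of_mul_le_mul_right ?_ (pow_pos hN 2)
      nlinarith [mul_le_mul_of_nonneg_left hNk (Complex.normSq_nonneg z)]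
    refine abs_le_of_sq_le_sq' ?_ (by positivity) |>.2
    rw [← Complex.normSq_eq_norm_sq, ← hxy]
    nlinarith [mul_nonneg (sq_nonneg d) (sq_nonneg (x - y))]
  have hoff : |(c ^ 2 - s ^ 2) * (M i j).re| ≤ ‖M i j‖ := by
    rw [abs_mul]
    have h1 : |c ^ 2 - s ^ 2| ≤ 1 := abs_le.2 ⟨by nlinarith, by nlinarith⟩
    calc _ ≤ 1 * |(M i j).re| := by gcongr
      _ ≤ _ := by rw [one_mul]; exact Complex.abs_re_le_norm _
  calc |c * s * ((M j j).re - (M i i).re)| = |z.re - (c ^ 2 - s ^ 2) * (M i j).re| := by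
        rw [hzre]; ring_nf
    _ ≤ |z.re| + |(c ^ 2 - s ^ 2) * (M i j).re| := abs_sub _ _
    _ ≤ _ := add_le_add ((Complex.abs_re_le_norm z).trans hznorm) hoff

theorem norm_toEuclideanCLM_sq_le {n : ℕ} (B : Matrix (Fin n) (Fin n) ℂ) :
    ‖Matrix.toEuclideanCLM (𝕜 := ℂ) B‖ ^ 2 ≤ ∑ i, ∑ j, ‖B i j‖ ^ 2 := by
  have hnn : 0 ≤ ∑ i, ∑ j, ‖B i j‖ ^ 2 := by positivity
  rw [← Real.le_sqrt (norm_nonneg _) hnn]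
  refine ContinuousLinearMap.opNorm_le_bound _ (Real.sqrt_nonneg _) fun x => ?_
  refine abs_le_of_sq_le_sq' ?_ (by positivity) |>.2
  rw [mul_pow, Real.sq_sqrt hnn, EuclideanSpace.norm_sq_eq, EuclideanSpace.norm_sq_eq,
    Finset.sum_mul]
  refine Finset.sum_le_sum fun i _ => ?_
  rw [Matrix.ofLp_toEuclideanCLM]
  calc ‖∑ j, B i j * x j‖ ^ 2 ≤ (∑ j, ‖B i j‖ * ‖x j‖) ^ 2 := by
        gcongr
        exact (norm_sum_le _ _).trans_eq (by simp)
    _ ≤ _ := Finset.sum_mul_sq_le_sq_mul_sq _ _ _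

theorem opNorm_le_re_trace {n : ℕ} {M : Matrix (Fin n) (Fin n) ℂ} (hM : M.PosSemidef) :
    opNorm M ≤ M.trace.re := by
  obtain ⟨B, rfl⟩ : ∃ B : Matrix (Fin n) (Fin n) ℂ, M = star B * B := by
    open scoped MatrixOrder in
    exact CStarAlgebra.nonneg_iff_eq_star_mul_self.1 hM.nonneg
  have h := norm_toEuclideanCLM_sq_le B
  rw [opNorm, map_mul, map_star, ContinuousLinearMap.star_eq_adjoint,
    ContinuousLinearMap.mul_def, ContinuousLinearMap.norm_adjoint_comp_self, ← sq]
  refine h.trans_eq ?_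
  rw [Finset.sum_comm]
  simp [Matrix.trace, Matrix.mul_apply, ← Complex.normSq_eq_norm_sq, Complex.normSq_apply]

/-- If neither the off-diagonal entries in the row of the centre nor the differences
of the diagonal entries are large, then the centre entry is at least `1 / s` times the norm. -/
theorem centre_ge_of_bounds {M : Matrix (Fin 3) (Fin 3) ℂ} (hM : M.PosSemidef)
    {d c σ s : ℝ} (hd : 0 ≤ d) (hcσ : 0 < c * σ)
    (hsmall : d / (2 * (c * σ)) ≤ 1 / 14 * (1 / 3 - 1 / s))
    (hoff₀ : Complex.normSq (M 1 0) ≤ 2 * d ^ 2 * ((M 0 0).re * ((M 1 1).re + (M 2 2).re)))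
    (hoff₂ : Complex.normSq (M 1 2) ≤ 2 * d ^ 2 * ((M 2 2).re * ((M 1 1).re + (M 0 0).re)))
    (hdiag₀ : |c * σ * ((M 1 1).re - (M 0 0).re)| ≤
      d * ((M 0 0).re + (M 1 1).re) / 2 + ‖M 0 1‖)
    (hdiag₂ : |c * σ * ((M 2 2).re - (M 1 1).re)| ≤
      d * ((M 1 1).re + (M 2 2).re) / 2 + ‖M 1 2‖) :
    (M 1 1).re ≥ 1 / s * opNorm M := by
  have h0 := re_diag_nonneg hM 0
  have h1 := re_diag_nonneg hM 1
  have h2 := re_diag_nonneg hM 2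
  have htr := opNorm_le_re_trace hM
  simp only [Matrix.trace, Fin.sum_univ_three, Complex.add_re, Matrix.diag_apply] at htr
  set T := (M 0 0).re + (M 1 1).re + (M 2 2).re with hT
  have hT0 : 0 ≤ T := by positivity
  have hnorm : ∀ {z : ℂ} {x y : ℝ}, x + y = T →
      Complex.normSq z ≤ 2 * d ^ 2 * (x * y) → ‖z‖ ≤ d * T := by
    intro z x y hxy hz
    refine abs_le_of_sq_le_sq' ?_ (by positivity) |>.2
    rw [← Complex.normSq_eq_norm_sq, ← hxy]
    nlinarith [mul_nonneg (sq_nonneg d) (add_nonneg (sq_nonneg x) (sq_nonneg y))]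
  have h10 : ‖M 0 1‖ ≤ d * T := by
    rw [← hM.isHermitian.apply 0 1, norm_star]
    exact hnorm (by rw [hT]; ring) hoff₀
  have h12 : ‖M 1 2‖ ≤ d * T := hnorm (by rw [hT]; ring) hoff₂
  have hη : d = d / (2 * (c * σ)) * (2 * (c * σ)) :=
    (div_mul_cancel₀ _ (mul_pos two_pos hcσ).ne').symm
  set η := d / (2 * (c * σ))
  have hdiff₀ : (M 0 0).re - (M 1 1).re ≤ 3 * η * T := by
    refine le_of_mul_le_mul_left ?_ hcσ
    have := (abs_le.1 hdiag₀).1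
    have hd' : d * ((M 0 0).re + (M 1 1).re) ≤ d * T := by gcongr; linarith
    have : c * σ * (3 * η * T) = 3 / 2 * (d * T) := by rw [hη]; ring
    linarith
  have hdiff₂ : (M 2 2).re - (M 1 1).re ≤ 3 * η * T := by
    refine le_of_mul_le_mul_left ?_ hcσ
    have := (abs_le.1 hdiag₂).2
    have hd' : d * ((M 1 1).re + (M 2 2).re) ≤ d * T := by gcongr; linarith
    have : c * σ * (3 * η * T) = 3 / 2 * (d * T) := by rw [hη]; ring
    linarith
  have hη0 : 0 ≤ η := div_nonneg hd (mul_pos two_pos hcσ).le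
  have hηT : 14 * η * T ≤ (1 / 3 - 1 / s) * T := by gcongr; linarith
  have hηT0 : 0 ≤ η * T := by positivity
  rcases le_total 0 (1 / s) with hs | hs
  · have : 1 / s * opNorm M ≤ 1 / s * T := by gcongr
    linarith
  · have : 1 / s * opNorm M ≤ 0 := mul_nonpos_of_nonpos_of_nonneg hs (norm_nonneg _)
    linarith

/-- For the rotated domino states `S₃(θ)`, any `s ≥ 3`, and
`1/r(s) = min{(1/14)(1/3 − 1/s), (1/(2(1+√2·s)))(1/3 − 1/s)}`: if `δ/sin 2θ ≤ 1/r(s)`,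
then `a₁₁ ≥ (1/s)·‖a‖_∞` and `b₁₁ ≥ (1/s)·‖b‖_∞`. -/
theorem stmt14
    (th : ℝ) (hth : 0 < th ∧ th ≤ Real.pi / 4)
    (a b : Matrix (Fin 3) (Fin 3) ℂ) (ha : a.PosSemidef) (hb : b.PosSemidef)
    (hnz : ∀ i, star (rotDomino th th th th i) ⬝ᵥ
      (a ⊗ₖ b).mulVec (rotDomino th th th th i) ≠ 0)
    (s : ℝ) (hs : 3 ≤ s)
    (rinv : ℝ)
    (hrinv : rinv = min ((1 / 14) * (1 / 3 - 1 / s))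
      ((1 / (2 * (1 + Real.sqrt 2 * s))) * (1 / 3 - 1 / s)))
    (hsmall : disturbance (rotDomino th th th th) a b / Real.sin (2 * th) ≤ rinv) :
    (a 1 1).re ≥ (1 / s) * opNorm a ∧ (b 1 1).re ≥ (1 / s) * opNorm b := by
  have hcs : Real.cos th ^ 2 + Real.sin th ^ 2 = 1 := Real.cos_sq_add_sin_sq th
  have hcos : 0 < Real.cos th :=
    Real.cos_pos_of_mem_Ioo ⟨by linarith [Real.pi_pos], by linarith [Real.pi_pos]⟩
  have hsin : 0 < Real.sin th := Real.sin_pos_of_pos_of_lt_pi hth.1 (by linarith [Real.pi_pos])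
  have hcσ := mul_pos hcos hsin
  have hd := disturbance_nonneg (rotDomino th th th th) a b
  have hbound : ∀ {i j}, i ≠ j → _ := fun {i j} hij =>
    normSq_le_disturbance (i := i) (j := j) ha hb hnz hij
  have hsmall' : disturbance (rotDomino th th th th) a b / (2 * (Real.cos th * Real.sin th)) ≤
      1 / 14 * (1 / 3 - 1 / s) := by
    rw [Real.sin_two_mul, mul_assoc, mul_comm (Real.sin th), hrinv] at hsmall
    exact hsmall.trans (min_le_left _ _)
  set d := disturbance (rotDomino th th th th) a b
  let u : Fin 2 → Fin 3 → ℂ :=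
    ![rotFst (Real.cos th) (Real.sin th) 0 1, rotSnd (Real.cos th) (Real.sin th) 0 1]
  let w : Fin 2 → Fin 3 → ℂ :=
    ![rotFst (Real.cos th) (Real.sin th) 1 2, rotSnd (Real.cos th) (Real.sin th) 1 2]
  have tile0u : ∀ k : Fin 2, rotDomino th th th th (![1, 2] k) = kp (e3 0) (u k) := by
    intro k; fin_cases k <;> rfl
  have tile2w : ∀ k : Fin 2, rotDomino th th th th (![3, 4] k) = kp (e3 2) (w k) := by
    intro k; fin_cases k <;> rfl
  have tilew0 : ∀ k : Fin 2, rotDomino th th th th (![5, 6] k) = kp (w k) (e3 0) := by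
    intro k; fin_cases k <;> rfl
  have tileu2 : ∀ k : Fin 2, rotDomino th th th th (![7, 8] k) = kp (u k) (e3 2) := by
    intro k; fin_cases k <;> rfl
  have centre : rotDomino th th th th 0 = kp (e3 1) (e3 1) := rfl
  have hfactor : ∀ i α β, rotDomino th th th th i = kp α β → sesq a α α ≠ 0 ∧ sesq b β β ≠ 0 := by
    intro i α β h
    have := hnz i
    rw [h, star_kp_dotProduct_kronecker_mulVec_kp] at this
    exact mul_ne_zero_iff.1 this
  have hpos : ∀ {M : Matrix (Fin 3) (Fin 3) ℂ} {i}, M.PosSemidef → sesq M (e3 i) (e3 i) ≠ 0 →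
      0 < (M i i).re := fun hM h => by
    rw [sesq_e3] at h
    exact (Complex.pos_iff.1 (lt_of_le_of_ne hM.diag_nonneg h.symm)).1
  have ha1 := hpos ha (hfactor _ _ _ centre).1
  have hb1 := hpos hb (hfactor _ _ _ centre).2
  have ha0 := hpos ha (hfactor _ _ _ (tile0u 0)).1
  have ha2 := hpos ha (hfactor _ _ _ (tile2w 0)).1
  have hb0 := hpos hb (hfactor _ _ _ (tilew0 0)).2
  have hb2 := hpos hb (hfactor _ _ _ (tileu2 0)).2
  have hdist : ∀ i j α β γ ζ, i ≠ j → rotDomino th th th th i = kp α β →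
      rotDomino th th th th j = kp γ ζ → DisturbedBy a b d α β γ ζ := by
    intro i j α β γ ζ hij hi hj
    have := hbound hij
    rw [hi, hj] at this
    exact disturbedBy_of_kp ha this
  have h01 := isPlaneBasis_rot hcs 0 1
  have h12 := isPlaneBasis_rot hcs 1 2
  constructor
  · refine centre_ge_of_bounds ha hd hcσ hsmall' ?_ ?_
      (abs_mul_diag_sub_le ha hd hcs hb2 (hdist _ _ _ _ _ _ (by decide) (tileu2 0) (tileu2 1)))
      (abs_mul_diag_sub_le ha hd hcs hb0 (hdist _ _ _ _ _ _ (by decide) (tilew0 0) (tilew0 1)))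
    · exact normSq_off_diag_le (u := u) (w := w) ha hb1 h01.symm h12
        (fun k => hdist _ _ _ _ _ _ (by revert k; decide) centre (tile0u k))
        (fun l k => hdist _ _ _ _ _ _ (by revert l k; decide) (tilew0 l) (tile0u k))
    · exact normSq_off_diag_le (u := w) (w := u) ha hb1 h12 h01.symm
        (fun k => hdist _ _ _ _ _ _ (by revert k; decide) centre (tile2w k))
        (fun l k => hdist _ _ _ _ _ _ (by revert l k; decide) (tileu2 l) (tile2w k))
  · refine centre_ge_of_bounds hb hd hcσ hsmall' ?_ ?_
      (abs_mul_diag_sub_le hb hd hcs ha0 (hdist _ _ _ _ _ _ (by decide) (tile0u 0) (tile0u 1)).swap)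
      (abs_mul_diag_sub_le hb hd hcs ha2 (hdist _ _ _ _ _ _ (by decide) (tile2w 0) (tile2w 1)).swap)
    · exact normSq_off_diag_le (u := w) (w := w) hb ha1 h12 h12
        (fun k => (hdist _ _ _ _ _ _ (by revert k; decide) centre (tilew0 k)).swap)
        (fun l k => (hdist _ _ _ _ _ _ (by revert l k; decide) (tile2w l) (tilew0 k)).swap)
    · exact normSq_off_diag_le (u := u) (w := u) hb ha1 h01.symm h01.symm
        (fun k => (hdist _ _ _ _ _ _ (by revert k; decide) centre (tileu2 k)).swap)
        (fun l k => (hdist _ _ _ _ _ _ (by revert l k; decide) (tile0u l) (tileu2 k)).swap)
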